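/- Let k be an algebraically closed field of characteristic ≠ 2 and let n ≥ 1, r ≥ 2 be integers. There exists a dense Zariski-open subset U of the space (Symm_n(k))^{r+1} of (r+1)-tuples of symmetric n×n matrices such that for every A = (A_0,…,A_r) ∈ U, there are only finitely many equivalence classes of tuples B = (B_0,…,B_r) ∈ (Symm_n(k))^{r+1} satisfying that det(x_0 B_0 + … + x_r B_r) is a nonzero scalar multiple of det(x_0 A_0 + … + x_r A_r) as polynomials in x_0,…,x_r; here two symmetric tuples B, B' are called equivalent if there exists an invertible n×n matrix g with B'_i = gᵀ B_i g for every i = 0,…,r. -/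

import Mathlib

/-!
The idea is to put presentations into a normal form and to recover its entries, up to finitely many
choices, from finitely many values of the determinant.

**Normal form.** For generic `A`, the matrix `A₀` is invertible and `A₀⁻¹ A₁` has distinct
eigenvalues. If `det (∑ xᵢ Bᵢ)` is proportional to `det (∑ xᵢ Aᵢ)`, then `B₀⁻¹ B₁` has the same
characteristic polynomial, so `B` is congruent to a tuple `(1, D, B₂, …, B_r)` with `D` diagonal
(`exists_congr_diagonal`), whose determinant is `det (∑ xᵢ Aᵢ) / det A₀`.

**Recovering the normal form.** For `j ≥ 2` the pair `(D, B_j)` has `n + n(n+1)/2` entries, and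
`det (x₀ + x₁ D + x₂ B_j)` is evaluated at equally many nodes. Choosing distinct scalars `l_i`, the
nodes are the pairwise intersections of the lines `L_i = x₀ + l_i x₁ + l_i² x₂`, together with two
further points on each line. These lines are the factors of the determinant at the base point
`D = diag l`, `B = diag l²`, where all node values vanish. Along suitable curves through the base
point, all node values are `t²` times a function whose value at `t = 0` is an arbitrary vector
(`exists_curve`). A polynomial relation among node values would therefore have a lowest homogeneous
part that vanishes everywhere, so the node values are algebraically independent
(`algebraicIndependent_nodeVal`). By transcendence degree every entry of `(D, B_j)` is algebraic
over them (`exists_relation`). When the leading coefficients of these algebraic relations do not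
vanish at the node values of `A`, the entries of the normal form lie in a finite set.

**Openness and density.** Each condition on `A` is the nonvanishing of a polynomial in its entries
(`exists_discriminant`, `exists_clear_denominators`) that is nonzero at some symmetric tuple, and a
product of such polynomials is again nonzero at some symmetric tuple (`NonvanishingOnSymm.prod`).
-/

open Matrix

/-- The generalized characteristic polynomial
`P_A(x_0, …, x_r) = det(x_0 A_0 + … + x_r A_r)` of an `(r+1)`-tuple of `n × n` matrices. -/
noncomputable def genCharPoly {k : Type*} [CommRing k] {n r : ℕ}
    (A : Fin (r + 1) → Matrix (Fin n) (Fin n) k) : MvPolynomial (Fin (r + 1)) k :=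
  Matrix.det (∑ i : Fin (r + 1), (MvPolynomial.X i : MvPolynomial (Fin (r + 1)) k) •
    ((A i).map MvPolynomial.C : Matrix (Fin n) (Fin n) (MvPolynomial (Fin (r + 1)) k)))


/-! ### Determinants of nearly diagonal matrices -/

/-- If the rows outside `{i, j}` are diagonal and the `(i, i)` and `(j, j)` entries vanish, then
the transposition `(i j)` is the only permutation contributing to the determinant. -/
theorem det_swap_pattern {k : Type*} [CommRing k] {n : ℕ} (M : Matrix (Fin n) (Fin n) k)
    {i j : Fin n} (hij : i ≠ j) (h : ∀ a b, a ≠ i → a ≠ j → a ≠ b → M a b = 0)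
    (hi : M i i = 0) (hj : M j j = 0) :
    M.det = -(M i j * M j i) * ∏ a ∈ (Finset.univ.erase i).erase j, M a a := by
  rw [det_apply', Finset.sum_eq_single (Equiv.swap i j)]
  · rw [Equiv.Perm.sign_swap hij, ← Finset.mul_prod_erase _ _ (Finset.mem_univ i),
      ← Finset.mul_prod_erase _ _ (Finset.mem_erase.2 ⟨hij.symm, Finset.mem_univ j⟩),
      Finset.prod_congr rfl (g := fun a => M a a)]
    · simp; ring
    · intro a ha
      simp only [Finset.mem_erase] at ha
      rw [Equiv.swap_apply_of_ne_of_ne ha.2.1 ha.1]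
  · intro σ _ hσ
    by_contra hne
    have h0 : ∀ a, M (σ a) a ≠ 0 := fun a ha =>
      hne (mul_eq_zero_of_right _ (Finset.prod_eq_zero (Finset.mem_univ a) ha))
    have h1 : ∀ a, σ a ≠ i → σ a ≠ j → σ a = a := fun a hi hj => by
      by_contra hc
      exact h0 a (h _ _ hi hj hc)
    have h2 : σ i ≠ i := fun e => h0 i (by rw [e, hi])
    have h3 : σ j ≠ j := fun e => h0 j (by rw [e, hj])
    have h4 : σ i = j := by
      by_contra hc
      exact h2 (h1 i h2 hc)
    have h5 : σ j = i := by
      by_contra hc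
      exact h3 (h1 j hc h3)
    apply hσ
    ext a
    by_cases hai : a = i
    · subst hai; simp [h4]
    by_cases haj : a = j
    · subst haj; simp [h5]
    rw [Equiv.swap_apply_of_ne_of_ne hai haj, h1 a]
    · rw [← h5]; exact fun e => haj (σ.injective e)
    · rw [← h4]; exact fun e => hai (σ.injective e)
  · simp

/-- If `M` is diagonal outside row and column `i`, and row `i` vanishes off the diagonal, then only
the identity permutation contributes to the determinant. -/
theorem det_unit_row {k : Type*} [CommRing k] {n : ℕ} (M : Matrix (Fin n) (Fin n) k)
    {i : Fin n} (h : ∀ a b, a ≠ i → b ≠ i → a ≠ b → M a b = 0)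
    (hi : ∀ b, b ≠ i → M i b = 0) :
    M.det = ∏ a, M a a := by
  rw [det_apply', Finset.sum_eq_single 1]
  · simp
  · intro σ _ hσ
    by_contra hne
    have h0 : ∀ a, M (σ a) a ≠ 0 := fun a ha =>
      hne (mul_eq_zero_of_right _ (Finset.prod_eq_zero (Finset.mem_univ a) ha))
    have h1 : σ i = i := by
      have := h0 (σ.symm i)
      rw [Equiv.apply_symm_apply] at this
      by_contra hc
      exact this (hi _ fun e => hc ((Equiv.symm_apply_eq _).1 e).symm)
    apply hσ
    ext a
    by_cases hai : a = i
    · subst hai; simp [h1]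
    · by_contra hc
      refine h0 a (h _ _ (fun e => hai (σ.injective (e.trans h1.symm))) hai fun e => hc ?_)
      simp [e]
  · simp

/-- For an arrow-shaped matrix (diagonal outside row and column `i`, with nonzero diagonal entries
there), the determinant is an affine function of the `(i, i)` entry with nonzero slope, so it takes
any prescribed value. -/
theorem exists_det_arrow {k : Type*} [Field k] {n : ℕ} (N : Matrix (Fin n) (Fin n) k) {i : Fin n}
    (h : ∀ a b, a ≠ i → b ≠ i → a ≠ b → N a b = 0) (hd : ∀ a, a ≠ i → N a a ≠ 0) (z : k) :
    ∃ w : k, (N.updateRow i (Function.update (N i) i w)).det = z := by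
  have key : ∀ w, (N.updateRow i (Function.update (N i) i w)).det =
      (N.updateRow i (Function.update (N i) i 0)).det
        + w * (N.updateRow i (Pi.single i 1)).det := by
    intro w
    rw [← det_updateRow_smul, ← det_updateRow_add]
    congr 2
    ext b
    by_cases hb : b = i
    · subst hb; simp
    · simp [hb]
  have hne : (N.updateRow i (Pi.single i 1)).det ≠ 0 := by
    rw [det_unit_row (i := i)]
    · refine Finset.prod_ne_zero_iff.2 fun a _ => ?_
      by_cases ha : a = i
      · subst ha; simp
      · simpa [updateRow_ne ha] using hd a ha
    · intro a b ha hb hab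
      rw [updateRow_ne ha]; exact h a b ha hb hab
    · intro b hb
      simp [hb]
  refine ⟨(z - (N.updateRow i (Function.update (N i) i 0)).det) /
    (N.updateRow i (Pi.single i 1)).det, ?_⟩
  rw [key, div_mul_cancel₀ _ hne]; ring

/-! ### The node values -/

/-- The symmetric matrix whose `(a, c)` entry is the value of `b` at the unordered pair
`s(a, c)`. -/
def symMat {R : Type*} {n : ℕ} (b : Sym2 (Fin n) → R) : Matrix (Fin n) (Fin n) R :=
  of fun a c => b s(a, c)

/-- The points of `k³` at which ternary determinants are evaluated. They are attached to the lines
`L_i = x₀ + l_i x₁ + l_i² x₂`: the node of `inl i` is the point of `L_i` on `x₂ = 0`, and the node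
of `s(i, j)` is the intersection of `L_i` and `L_j` (for `i = j`, the point where `L_i` touches the
conic enveloped by these lines). The value of `L_a` at the node of `s(i, j)` is
`(l_a - l_i) * (l_a - l_j)`, and at the node of `inl i` it is `l_a - l_i`. -/
def node {k : Type*} [Field k] {n : ℕ} (l : Fin n → k) : Fin n ⊕ Sym2 (Fin n) → k × k × k
  | .inl i => (-l i, 1, 0)
  | .inr s => Sym2.lift ⟨fun i j => (l i * l j, -(l i + l j), 1), fun i j => by
      simp [mul_comm, add_comm]⟩ s

/-- The value of `det (x₀ 1 + x₁ D + x₂ B)` at the node of `m`, where the diagonal matrix `D` and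
the symmetric matrix `B` have entries given by the two halves of `y`. There are as many nodes as
coordinates of `y`; both are indexed by `Fin n ⊕ Sym2 (Fin n)`. -/
noncomputable def nodeVal {k : Type*} [Field k] {n : ℕ} (l : Fin n → k) {R : Type*} [CommRing R]
    [Algebra k R] (m : Fin n ⊕ Sym2 (Fin n)) (y : Fin n ⊕ Sym2 (Fin n) → R) : R :=
  ((node l m).1 • (1 : Matrix (Fin n) (Fin n) R)
    + (node l m).2.1 • diagonal (fun a => y (.inl a))
    + (node l m).2.2 • symMat (fun s => y (.inr s))).det

theorem map_nodeVal {k : Type*} [Field k] {n : ℕ} (l : Fin n → k) {R S : Type*} [CommRing R]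
    [Algebra k R] [CommRing S] [Algebra k S] (φ : R →ₐ[k] S) (m : Fin n ⊕ Sym2 (Fin n))
    (y : Fin n ⊕ Sym2 (Fin n) → R) :
    φ (nodeVal l m y) = nodeVal l m (fun v => φ (y v)) := by
  unfold nodeVal
  rw [AlgHom.map_det]
  congr 1
  ext a b
  by_cases h : a = b
  · subst h; simp [symMat]
  · simp [symMat, h]

open Polynomial in
/-- There is a curve `y` through the base point `D = diag l`, `B = diag l²` (at `X = 0`) along which
every node value is divisible by `X ^ 2`, and the vector of quotients at `X = 0` may be prescribed.
The diagonal entries move to order `X ^ 2` and the off-diagonal ones to order `X`, so the quotients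
at `X = 0` form a triangular system: `inl i` determines the `X ^ 2`-coefficient of `D i i`,
`s(i, j)` with `i ≠ j` determines the square of the `X`-coefficient of `B i j`, and then `s(i, i)`
determines the `X ^ 2`-coefficient of `B i i`. -/
theorem exists_curve {k : Type*} [Field k] [IsAlgClosed k] {n : ℕ} (l : Fin n → k)
    (hl : Function.Injective l) (z : Fin n ⊕ Sym2 (Fin n) → k) :
    ∃ y Ψ : Fin n ⊕ Sym2 (Fin n) → k[X], ∀ m,
      nodeVal l m y = X ^ 2 * Ψ m ∧ (Ψ m).eval 0 = z m := by
  have hsub : ∀ {a b}, a ≠ b → l a - l b ≠ 0 := fun h => sub_ne_zero.2 (hl.ne h)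
  -- Second-order coefficients of the diagonal of `D`.
  let d : Fin n → k := fun i => z (.inl i) / ∏ a ∈ Finset.univ.erase i, (l a - l i)
  -- First-order coefficients of the off-diagonal entries of `B`, found by extracting square roots.
  have hO : ∀ s : Sym2 (Fin n), ∃ w : k, ∀ i j, s = s(i, j) → i ≠ j →
      -(w * w) * ∏ a ∈ (Finset.univ.erase i).erase j, ((l a - l i) * (l a - l j)) = z (.inr s) := by
    intro s
    induction s using Sym2.ind with
    | _ i j =>
      by_cases hij : i = j
      · refine ⟨0, fun i' j' h h' => ?_⟩
        rw [Sym2.eq_iff] at h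
        grind
      have hp : ∏ a ∈ (Finset.univ.erase i).erase j, ((l a - l i) * (l a - l j)) ≠ 0 := by
        refine Finset.prod_ne_zero_iff.2 fun a ha => ?_
        simp only [Finset.mem_erase] at ha
        exact mul_ne_zero (hsub ha.2.1) (hsub ha.1)
      obtain ⟨w, hw⟩ := IsAlgClosed.exists_eq_mul_self
        (-(z (.inr s(i, j)) / ∏ a ∈ (Finset.univ.erase i).erase j, ((l a - l i) * (l a - l j))))
      have h1 : -(w * w) * ∏ a ∈ (Finset.univ.erase i).erase j, ((l a - l i) * (l a - l j))
          = z (.inr s(i, j)) := by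
        rw [← hw]; field_simp
      refine ⟨w, fun i' j' h h' => ?_⟩
      rw [Sym2.eq_iff] at h
      rcases h with ⟨rfl, rfl⟩ | ⟨rfl, rfl⟩
      · exact h1
      · rw [← h1, Finset.erase_right_comm]
        simp only [mul_comm]
  choose O hO using hO
  -- `w i` is the second-order coefficient of the `i`-th diagonal entry of the pencil at the node
  -- `s(i, i)`; the corresponding coefficient of `B i i` is `w i + 2 * l i * d i`.
  have hw : ∀ i : Fin n, ∃ w : k, (((of fun a b => if a = b then (l a - l i) * (l a - l i) else
      if a = i ∨ b = i then O s(a, b) else 0 : Matrix (Fin n) (Fin n) k)).updateRow i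
        (Function.update (fun b => if i = b then 0 else O s(i, b)) i w)).det = z (.inr s(i, i)) := by
    intro i
    obtain ⟨w, hw⟩ := exists_det_arrow (of fun a b => if a = b then (l a - l i) * (l a - l i) else
      if a = i ∨ b = i then O s(a, b) else 0 : Matrix (Fin n) (Fin n) k) (i := i)
      (fun a b ha hb hab => by simp [ha, hb, hab])
      (fun a ha => by simpa using hsub ha) (z (.inr s(i, i)))
    refine ⟨w, ?_⟩
    rw [← hw]
    congr 2
    ext b
    by_cases hb : b = i
    · subst hb; simp
    · simp [hb]
  choose w hw using hw
  let y : Fin n ⊕ Sym2 (Fin n) → k[X] := Sum.elim (fun a => C (l a) + X ^ 2 * C (d a))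
    (fun s => if s.IsDiag then C (l s.out.1 ^ 2) + X ^ 2 * C (w s.out.1 + 2 * l s.out.1 * d s.out.1)
      else X * C (O s))
  have hyd : ∀ a, y (.inr s(a, a)) = C (l a ^ 2) + X ^ 2 * C (w a + 2 * l a * d a) := by
    intro a
    have : (s(a, a) : Sym2 (Fin n)).out.1 = a := by
      have := Sym2.out_fst_mem s(a, a)
      simpa using this
    simp [y, this]
  have hyo : ∀ a b, a ≠ b → y (.inr s(a, b)) = X * C (O s(a, b)) := by
    intro a b hab
    simp [y, hab]
  have hyl : ∀ a, y (.inl a) = C (l a) + X ^ 2 * C (d a) := fun a => rfl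
  clear_value y
  suffices H : ∀ m, ∃ Ψ : k[X], nodeVal l m y = X ^ 2 * Ψ ∧ Ψ.eval 0 = z m by
    choose Ψ hΨ using H
    exact ⟨y, Ψ, hΨ⟩
  rintro (i | s)
  · refine ⟨C (d i) * ∏ a ∈ Finset.univ.erase i, (C (l a - l i) + X ^ 2 * C (d a)), ?_, ?_⟩
    · have : nodeVal l (.inl i) y = ∏ a, (C (l a - l i) + X ^ 2 * C (d a)) := by
        unfold nodeVal
        rw [← det_diagonal]
        congr 1
        ext1 a b
        by_cases hab : a = b
        · subst hab
          simp [node, hyl, Polynomial.smul_eq_C_mul]; ring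
        · simp [node, hab]
      rw [this, ← Finset.mul_prod_erase _ _ (Finset.mem_univ i)]
      simp; ring
    · rw [eval_mul, eval_prod]
      simp only [eval_C, eval_add, eval_mul, eval_pow, eval_X]
      simp only [d]
      have : ∏ a ∈ Finset.univ.erase i, (l a - l i) ≠ 0 := by
        refine Finset.prod_ne_zero_iff.2 fun a ha => hsub (Finset.ne_of_mem_erase ha)
      simp [this]
  · induction s using Sym2.ind with
    | _ i j =>
      have hent : nodeVal l (.inr s(i, j)) y = (of fun a b => if a = b then
          C ((l a - l i) * (l a - l j)) + X ^ 2 * C (w a + 2 * l a * d a - (l i + l j) * d a)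
          else X * C (O s(a, b))).det := by
        unfold nodeVal
        congr 1
        ext1 a b
        by_cases hab : a = b
        · subst hab
          simp [node, hyl, symMat, hyd, Polynomial.smul_eq_C_mul]; ring
        · simp [node, symMat, hab, hyo]
      rw [hent]
      by_cases hij : i = j
      · subst hij
        -- Row `i` and column `i` are both divisible by `X`; `N` is what remains. At `X = 0` it is
        -- an arrow matrix.
        let N : Matrix (Fin n) (Fin n) k[X] := of fun a b => if a = b then
          (if a = i then C (w i) else
            C ((l a - l i) * (l a - l i)) + X ^ 2 * C (w a + 2 * l a * d a - (l i + l i) * d a))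
          else (if a = i ∨ b = i then C (O s(a, b)) else X * C (O s(a, b)))
        let v : Fin n → k[X] := fun a => if a = i then X else 1
        have hv : ∏ a, v a = X := by simp [v]
        refine ⟨N.det, ?_, ?_⟩
        · have : X ^ 2 * N.det = (∏ a, v a) * ((∏ a, v a) * N.det) := by rw [hv]; ring
          rw [this, ← det_mul_row, ← det_mul_column]
          congr 1
          ext1 a b
          by_cases hab : a = b
          · subst hab
            by_cases hai : a = i
            · subst hai; simp [v, N, map_ofNat (C : k →+* k[X]) 2]; ring
            · simp [v, N, hai]
          · by_cases hai : a = i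
            · subst hai; simp [v, N, hab, Ne.symm hab]
            · by_cases hbi : b = i
              · subst hbi; simp [v, N, hai]
              · simp [v, N, hab, hai, hbi]
        · rw [← hw i, ← coe_evalRingHom, RingHom.map_det]
          congr 1
          ext a b
          by_cases hai : a = i
          · subst hai
            by_cases hab : b = a
            · subst hab; simp [N]
            · simp [N, hab, Ne.symm hab]
          · rw [updateRow_ne hai]
            by_cases hab : a = b
            · subst hab; simp [N, hai]
            · by_cases hbi : b = i
              · subst hbi; simp [N, hai]
              · simp [N, hab, hai, hbi]
      · -- Rows `i` and `j` are divisible by `X`; what remains has the transposition pattern at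
        -- `X = 0`.
        let N : Matrix (Fin n) (Fin n) k[X] := of fun a b => if a = i ∨ a = j then
            (if a = b then X * C (w a + 2 * l a * d a - (l i + l j) * d a) else C (O s(a, b)))
          else (if a = b then
          C ((l a - l i) * (l a - l j)) + X ^ 2 * C (w a + 2 * l a * d a - (l i + l j) * d a)
          else X * C (O s(a, b)))
        let v : Fin n → k[X] := fun a => if a = i ∨ a = j then X else 1
        have hv : ∏ a, v a = X ^ 2 := by
          rw [← Finset.mul_prod_erase _ _ (Finset.mem_univ i),
            ← Finset.mul_prod_erase _ _ (Finset.mem_erase.2 ⟨Ne.symm hij, Finset.mem_univ j⟩),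
            Finset.prod_eq_one]
          · simp [v]; ring
          · intro a ha
            simp only [Finset.mem_erase] at ha
            simp [v, ha]
        refine ⟨N.det, ?_, ?_⟩
        · have : X ^ 2 * N.det = (∏ a, v a) * N.det := by rw [hv]
          rw [this, ← det_mul_column]
          congr 1
          ext1 a b
          by_cases ha : a = i ∨ a = j
          · by_cases hab : a = b
            · subst hab
              simp only [of_apply, N, v, if_pos ha, if_true]
              rcases ha with rfl | rfl <;> simp <;> ring
            · simp [v, N, hab, ha]
          · by_cases hab : a = b
            · subst hab; simp [v, N, ha]
            · simp [v, N, hab, ha]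
        · rw [← hO s(i, j) i j rfl hij, ← coe_evalRingHom, RingHom.map_det,
            det_swap_pattern _ hij]
          · have h1 : ∀ a ∈ (Finset.univ.erase i).erase j,
                ((evalRingHom (0 : k)).mapMatrix N) a a = (l a - l i) * (l a - l j) := by
              intro a ha
              simp only [Finset.mem_erase] at ha
              simp [N, ha]
            rw [Finset.prod_congr rfl h1]
            simp [N, hij, Ne.symm hij, Sym2.eq_swap (a := j) (b := i)]
          · intro a b hai haj hab
            simp [N, hai, haj, hab]
          · simp [N]
          · simp [N]

/-! ### Algebraic independence of the node values -/

theorem aeval_mul_of_isHomogeneous {k S σ : Type*} [CommRing k] [CommRing S] [Algebra k S]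
    {G : MvPolynomial σ k} {e : ℕ} (hG : G.IsHomogeneous e) (c : S) (x : σ → S) :
    MvPolynomial.aeval (fun m => c * x m) G = c ^ e * MvPolynomial.aeval x G := by
  rw [MvPolynomial.aeval_def, MvPolynomial.aeval_def, MvPolynomial.eval₂_eq, MvPolynomial.eval₂_eq,
    Finset.mul_sum]
  refine Finset.sum_congr rfl fun s hs => ?_
  simp only [mul_pow, Finset.prod_mul_distrib, Finset.prod_pow_eq_pow_sum]
  rw [hG.degree_eq_sum_deg_support hs]
  ring

open Polynomial in
/-- The node values of the generic pair `(D, B)` are algebraically independent. Restricting a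
relation to a curve from `exists_curve` and dividing by a power of `X` shows that its lowest
homogeneous component vanishes at every point. -/
theorem algebraicIndependent_nodeVal {k : Type*} [Field k] [IsAlgClosed k] {n : ℕ} (l : Fin n → k)
    (hl : Function.Injective l) :
    AlgebraicIndependent k (fun m : Fin n ⊕ Sym2 (Fin n) =>
      nodeVal l m (MvPolynomial.X : _ → MvPolynomial (Fin n ⊕ Sym2 (Fin n)) k)) := by
  rw [algebraicIndependent_iff]
  intro G hG
  by_contra hne
  have hex : ∃ e, MvPolynomial.homogeneousComponent e G ≠ 0 := by
    by_contra! h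
    exact hne (by rw [← MvPolynomial.sum_homogeneousComponent G]; simp [h])
  classical
  set e := Nat.find hex with he
  have hmin : ∀ i < e, MvPolynomial.homogeneousComponent i G = 0 := fun i hi => by
    simpa using Nat.find_min hex hi
  have hGe : MvPolynomial.homogeneousComponent e G ≠ 0 := Nat.find_spec hex
  obtain ⟨z, hz⟩ : ∃ z, MvPolynomial.eval z (MvPolynomial.homogeneousComponent e G) ≠ 0 := by
    by_contra! h
    exact hGe (MvPolynomial.funext fun x => by simpa using h x)
  obtain ⟨y, Ψ, hy⟩ := exists_curve l hl z
  have h0 : MvPolynomial.aeval (fun m => X ^ 2 * Ψ m) G = 0 := by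
    have := congrArg (MvPolynomial.aeval y) hG
    rw [map_zero] at this
    rw [← this, ← AlgHom.comp_apply]
    congr 1
    ext1 m
    simp [map_nodeVal, ← hy m]
  have hdvd : ∀ i, ∃ q, MvPolynomial.aeval (fun m => X ^ 2 * Ψ m)
      (MvPolynomial.homogeneousComponent i G) = X ^ (2 * e) *
        ((if i = e then MvPolynomial.aeval Ψ (MvPolynomial.homogeneousComponent e G) else 0)
          + X * q) := by
    intro i
    rw [aeval_mul_of_isHomogeneous (MvPolynomial.homogeneousComponent_isHomogeneous i G), ← pow_mul]
    rcases lt_trichotomy i e with h | h | h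
    · exact ⟨0, by simp [hmin i h, h.ne]⟩
    · exact ⟨0, by simp [h]⟩
    · refine ⟨X ^ (2 * (i - e) - 1) *
        MvPolynomial.aeval Ψ (MvPolynomial.homogeneousComponent i G), ?_⟩
      rw [if_neg h.ne', zero_add, ← mul_assoc, ← mul_assoc, ← pow_succ, ← pow_add]
      congr 2
      omega
  choose q hq using hdvd
  have hmem : e ∈ Finset.range (G.totalDegree + 1) := by
    by_contra h
    rw [Finset.mem_range, not_lt] at h
    exact hGe (MvPolynomial.homogeneousComponent_eq_zero _ _ (by omega))
  rw [← MvPolynomial.sum_homogeneousComponent G, map_sum, Finset.sum_congr rfl fun i _ => hq i,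
    ← Finset.mul_sum, Finset.sum_add_distrib, Finset.sum_ite_eq_of_mem' _ _ _ hmem,
    ← Finset.mul_sum, mul_eq_zero, or_iff_right (pow_ne_zero _ X_ne_zero)] at h0
  apply hz
  have h1 := congrArg (Polynomial.aeval (0 : k)) h0
  rw [map_add, map_mul, Polynomial.aeval_X, zero_mul, add_zero, map_zero, ← AlgHom.comp_apply] at h1
  rw [← h1, ← MvPolynomial.coe_aeval_eq_eval, RingHom.coe_coe]
  congr 1
  ext1 m
  simpa [Polynomial.coe_aeval_eq_eval] using (hy m).2.symm

theorem eval_aeval_nodeVal {k : Type*} [Field k] {n : ℕ} (l : Fin n → k)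
    (G : MvPolynomial (Fin n ⊕ Sym2 (Fin n)) k) (y : Fin n ⊕ Sym2 (Fin n) → k) :
    MvPolynomial.eval y (MvPolynomial.aeval (fun m : Fin n ⊕ Sym2 (Fin n) =>
      nodeVal l m (MvPolynomial.X : _ → MvPolynomial (Fin n ⊕ Sym2 (Fin n)) k)) G) =
    MvPolynomial.eval (fun m => nodeVal l m y) G := by
  rw [← MvPolynomial.coe_aeval_eq_eval, ← MvPolynomial.coe_aeval_eq_eval, RingHom.coe_coe,
    RingHom.coe_coe, ← AlgHom.comp_apply]
  congr 1
  ext1 m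
  rw [AlgHom.comp_apply, MvPolynomial.aeval_X, map_nodeVal]
  simp

open Polynomial in
/-- Every entry of `(D, B)` is a root of a nonzero polynomial whose coefficients are polynomials in
the node values: by algebraic independence and a count of variables, the node values form a
transcendence basis. -/
theorem exists_relation {k : Type*} [Field k] [IsAlgClosed k] {n : ℕ} (l : Fin n → k)
    (hl : Function.Injective l) (v : Fin n ⊕ Sym2 (Fin n)) :
    ∃ q : Polynomial (MvPolynomial (Fin n ⊕ Sym2 (Fin n)) k), q ≠ 0 ∧
      ∀ y : Fin n ⊕ Sym2 (Fin n) → k,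
        (q.map (MvPolynomial.eval fun m => nodeVal l m y)).eval (y v) = 0 := by
  have hai := algebraicIndependent_nodeVal l hl
  have htb := hai.isTranscendenceBasis_of_lift_trdeg_le_of_finite (by
    rw [MvPolynomial.trdeg_of_isDomain]; simp)
  have := htb.isAlgebraic
  obtain ⟨p, hp0, hp⟩ := this.isAlgebraic (MvPolynomial.X v)
  let φ := hai.aevalEquiv
  refine ⟨p.map (φ.symm : _ →+* _), ?_, fun y => ?_⟩
  · rwa [Ne, Polynomial.map_eq_zero_iff]
    exact φ.symm.injective
  · rw [Polynomial.map_map]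
    have h1 := congrArg (MvPolynomial.eval y) hp
    rw [map_zero, Polynomial.aeval_def, Polynomial.hom_eval₂, MvPolynomial.eval_X] at h1
    rw [Polynomial.eval_map, ← h1]
    congr 1
    ext1 a
    obtain ⟨b, rfl⟩ := φ.surjective a
    simp only [RingHom.comp_apply, RingHom.coe_coe, AlgEquiv.symm_apply_apply]
    change _ = MvPolynomial.eval y ((φ b : MvPolynomial (Fin n ⊕ Sym2 (Fin n)) k))
    rw [← eval_aeval_nodeVal]
    exact congrArg _ (hai.algebraMap_aevalEquiv b).symm

/-! ### Polynomial functions on symmetric tuples -/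

/-- A polynomial in the fractions `Z m / δ` becomes a polynomial after multiplication by a power
of `δ`. -/
theorem exists_clear_denominators {k σ τ : Type*} [Field k] (δ : MvPolynomial τ k)
    (Z : σ → MvPolynomial τ k) (g : MvPolynomial σ k) :
    ∃ (F : MvPolynomial τ k) (N : ℕ), ∀ x : τ → k, MvPolynomial.eval x δ ≠ 0 →
      MvPolynomial.eval x F = MvPolynomial.eval x δ ^ N *
        MvPolynomial.eval (fun m => MvPolynomial.eval x (Z m) / MvPolynomial.eval x δ) g := by
  induction g using MvPolynomial.induction_on with
  | C a => exact ⟨MvPolynomial.C a, 0, fun x _ => by simp⟩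
  | add p q hp hq =>
    obtain ⟨F, N, hF⟩ := hp
    obtain ⟨F', N', hF'⟩ := hq
    refine ⟨F * δ ^ N' + F' * δ ^ N, N + N', fun x hx => ?_⟩
    simp only [map_add, map_mul, map_pow, hF x hx, hF' x hx]
    ring
  | mul_X p m hp =>
    obtain ⟨F, N, hF⟩ := hp
    refine ⟨F * Z m, N + 1, fun x hx => ?_⟩
    simp only [map_mul, hF x hx, MvPolynomial.eval_X]
    field_simp
    ring

/-- The point of affine space whose coordinates are the matrix entries of the tuple `A`. -/
def entries {k : Type*} {n r : ℕ} (A : Fin (r + 1) → Matrix (Fin n) (Fin n) k) :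
    Fin (r + 1) × Fin n × Fin n → k := fun p => A p.1 p.2.1 p.2.2

/-- The polynomial `f` in the matrix entries does not vanish identically on symmetric tuples. -/
def NonvanishingOnSymm {k : Type*} [Field k] {n r : ℕ}
    (f : MvPolynomial (Fin (r + 1) × Fin n × Fin n) k) : Prop :=
  ∃ A : Fin (r + 1) → Matrix (Fin n) (Fin n) k, (∀ i, (A i).IsSymm) ∧
    MvPolynomial.eval (entries A) f ≠ 0

/-- Restriction to symmetric tuples amounts to identifying the variables at `(a, b)` and `(b, a)`.
Hence the polynomials vanishing on all symmetric tuples form the kernel of a map to a domain, and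
nonvanishing is stable under products. -/
theorem nonvanishingOnSymm_iff {k : Type*} [Field k] [Infinite k] {n r : ℕ}
    (f : MvPolynomial (Fin (r + 1) × Fin n × Fin n) k) :
    NonvanishingOnSymm f ↔
      MvPolynomial.rename (fun p => (p.1, s(p.2.1, p.2.2))) f ≠ 0 := by
  constructor
  · rintro ⟨A, hA, hf⟩ h0
    apply hf
    let a : Fin (r + 1) × Sym2 (Fin n) → k := fun p =>
      Sym2.lift ⟨fun x y => A p.1 x y, fun x y => (hA p.1).apply y x⟩ p.2
    have := congrArg (MvPolynomial.eval a) h0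
    rw [MvPolynomial.eval_rename, map_zero] at this
    exact this
  · intro h
    obtain ⟨a, ha⟩ : ∃ a, MvPolynomial.eval a
        (MvPolynomial.rename (fun p => (p.1, s(p.2.1, p.2.2))) f) ≠ 0 := by
      by_contra! h'
      exact h (MvPolynomial.funext fun x => by simpa using h' x)
    rw [MvPolynomial.eval_rename] at ha
    refine ⟨fun i => symMat fun s => a (i, s), fun i => ?_, ha⟩
    ext x y
    simp [symMat, Sym2.eq_swap]

theorem NonvanishingOnSymm.mul {k : Type*} [Field k] [Infinite k] {n r : ℕ}
    {f g : MvPolynomial (Fin (r + 1) × Fin n × Fin n) k} (hf : NonvanishingOnSymm f)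
    (hg : NonvanishingOnSymm g) : NonvanishingOnSymm (f * g) := by
  rw [nonvanishingOnSymm_iff] at *
  rw [map_mul]
  exact mul_ne_zero hf hg

theorem NonvanishingOnSymm.prod {k : Type*} [Field k] [Infinite k] {n r : ℕ} {ι : Type*}
    (s : Finset ι) {f : ι → MvPolynomial (Fin (r + 1) × Fin n × Fin n) k}
    (hf : ∀ i ∈ s, NonvanishingOnSymm (f i)) : NonvanishingOnSymm (∏ i ∈ s, f i) := by
  rw [nonvanishingOnSymm_iff, map_prod]
  exact Finset.prod_ne_zero_iff.2 fun i hi => (nonvanishingOnSymm_iff _).1 (hf i hi)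

theorem eval_genCharPoly {k : Type*} [CommRing k] {n r : ℕ}
    (A : Fin (r + 1) → Matrix (Fin n) (Fin n) k) (x : Fin (r + 1) → k) :
    MvPolynomial.eval x (genCharPoly A) = (∑ i, x i • A i).det := by
  unfold genCharPoly
  rw [RingHom.map_det]
  congr 1
  ext a b
  simp [Matrix.sum_apply]

/-! ### Simultaneous diagonalization of a pencil -/

/-- Eigenvectors of `E = δ • B₀⁻¹ * B₁` for distinct eigenvalues are orthogonal for both `B₀` and
`B₁`, so an eigenbasis diagonalizes both forms; rescaling by square roots turns `B₀` into `1`. -/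
theorem exists_congr_diagonal {k : Type*} [Field k] [IsAlgClosed k] {n : ℕ}
    {B₀ B₁ E : Matrix (Fin n) (Fin n) k} (h₀ : B₀.IsSymm) (h₁ : B₁.IsSymm) (hdet : B₀.det ≠ 0)
    {δ : k} (hδ : δ ≠ 0) (hE : B₀ * E = δ • B₁) (hsep : E.charpoly.Separable) :
    ∃ g : Matrix (Fin n) (Fin n) k, IsUnit g ∧ gᵀ * B₀ * g = 1 ∧
      ∃ d : Fin n → k, gᵀ * B₁ * g = diagonal d := by
  obtain ⟨μ, hμ, hroot⟩ : ∃ μ : Fin n → k, Function.Injective μ ∧ ∀ i, E.charpoly.IsRoot (μ i) := by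
    classical
    have hcard : E.charpoly.roots.toFinset.card = n := by
      rw [Multiset.toFinset_card_of_nodup (Polynomial.nodup_roots hsep),
        ← (IsAlgClosed.splits E.charpoly).natDegree_eq_card_roots, charpoly_natDegree_eq_dim,
        Fintype.card_fin]
    let e := (E.charpoly.roots.toFinset.equivFinOfCardEq hcard).symm
    refine ⟨fun i => e i, fun i j h => e.injective (Subtype.ext h), fun i => ?_⟩
    have := (e i).2
    rw [Multiset.mem_toFinset, Polynomial.mem_roots'] at this
    exact this.2
  have hev : ∀ i, ∃ v : Fin n → k, v ≠ 0 ∧ E *ᵥ v = μ i • v := by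
    intro i
    have h0 : (scalar (Fin n) (μ i) - E).det = 0 := by
      rw [← eval_charpoly]; exact hroot i
    obtain ⟨v, hv, h⟩ := exists_mulVec_eq_zero_iff.2 h0
    refine ⟨v, hv, ?_⟩
    rw [sub_mulVec, sub_eq_zero] at h
    rw [← h]
    ext a
    simp [scalar_apply]
  choose v hv0 hv using hev
  have hli : LinearIndependent k v :=
    Module.End.eigenvectors_linearIndependent' (toLin' E) μ hμ v fun i => by
      refine ⟨?_, hv0 i⟩
      rw [Module.End.mem_eigenspace_iff, toLin'_apply, hv]
  let V : Matrix (Fin n) (Fin n) k := (of v)ᵀ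
  have hVu : IsUnit V := by
    rw [isUnit_transpose]
    exact linearIndependent_rows_iff_isUnit.1 hli
  have hEV : E * V = V * diagonal μ := by
    ext a b
    rw [mul_diagonal]
    have := congrFun (hv b) a
    simpa [mulVec, dotProduct, mul_apply, V, mul_comm] using this
  -- The symmetric Gram matrix `M` of `B₀` in the eigenbasis stays symmetric after multiplication by
  -- `diagonal μ`, which forces its off-diagonal entries to vanish.
  let M : Matrix (Fin n) (Fin n) k := Vᵀ * B₀ * V
  have hMs : Mᵀ = M := by
    simp [M, transpose_mul, h₀.eq, Matrix.mul_assoc]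
  have hMμ : M * diagonal μ = δ • (Vᵀ * B₁ * V) := by
    simp only [M]
    rw [Matrix.mul_assoc, ← hEV, ← Matrix.mul_assoc, Matrix.mul_assoc _ B₀ E, hE]
    simp
  have hsym : (M * diagonal μ)ᵀ = M * diagonal μ := by
    rw [hMμ]
    simp [transpose_mul, h₁.eq, Matrix.mul_assoc]
  have hMoff : ∀ a b, a ≠ b → M a b = 0 := by
    intro a b hab
    have h := congrFun (congrFun hsym a) b
    have h2 := congrFun (congrFun hMs a) b
    rw [transpose_apply] at h2
    rw [transpose_apply, mul_diagonal, mul_diagonal, h2] at h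
    have : M a b * (μ a - μ b) = 0 := by rw [mul_sub, h, sub_self]
    exact (mul_eq_zero.1 this).resolve_right (sub_ne_zero.2 (hμ.ne hab))
  have hMd : M = diagonal fun a => M a a := by
    ext a b
    by_cases hab : a = b
    · subst hab; simp
    · simp [hab, hMoff]
  have hMdet : M.det ≠ 0 := by
    have := (isUnit_iff_isUnit_det V).1 hVu
    simp [M, hdet, this.ne_zero]
  have hMne : ∀ a, M a a ≠ 0 := by
    rw [hMd, det_diagonal] at hMdet
    exact fun a => Finset.prod_ne_zero_iff.1 hMdet a (Finset.mem_univ a)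
  choose c hc using fun a => IsAlgClosed.exists_eq_mul_self (M a a)⁻¹
  have hc0 : ∀ a, c a ≠ 0 := fun a h => by
    have := hc a
    rw [h, zero_mul, inv_eq_zero] at this
    exact hMne a this
  refine ⟨V * diagonal c, hVu.mul ?_, ?_, fun a => c a * (δ⁻¹ * (M a a * μ a)) * c a, ?_⟩
  · rw [isUnit_iff_isUnit_det, det_diagonal, isUnit_iff_ne_zero]
    exact Finset.prod_ne_zero_iff.2 fun a _ => hc0 a
  · have : (V * diagonal c)ᵀ * B₀ * (V * diagonal c) = diagonal c * M * diagonal c := by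
      simp [M, transpose_mul, Matrix.mul_assoc]
    rw [this, hMd, diagonal_mul_diagonal, diagonal_mul_diagonal, ← diagonal_one]
    congr 1
    ext a
    have := hc a
    have h2 := hMne a
    calc c a * M a a * c a = M a a * (c a * c a) := by ring
      _ = 1 := by rw [← this, mul_inv_cancel₀ h2]
  · have : (V * diagonal c)ᵀ * B₁ * (V * diagonal c)
        = diagonal c * (δ⁻¹ • (M * diagonal μ)) * diagonal c := by
      rw [hMμ, smul_smul, inv_mul_cancel₀ hδ, one_smul]
      simp [transpose_mul, Matrix.mul_assoc]
    rw [this, hMd, diagonal_mul_diagonal, ← diagonal_smul, diagonal_mul_diagonal,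
      diagonal_mul_diagonal]
    simp

/-- Separability of the characteristic polynomial of `adjugate A₀ * A₁` is an open condition, given
by a resultant. The adjugate stands in for the inverse, which is not polynomial in the entries. -/
theorem exists_discriminant {k : Type*} [Field k] [IsAlgClosed k] {n : ℕ} (hn : 1 ≤ n) {τ : Type*}
    (A₀ A₁ : Matrix (Fin n) (Fin n) (MvPolynomial τ k)) :
    ∃ F : MvPolynomial τ k, ∀ x : τ → k, MvPolynomial.eval x F ≠ 0 ↔
      (adjugate (A₀.map (MvPolynomial.eval x)) * A₁.map (MvPolynomial.eval x)).charpoly.Separable := by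
  let p := (adjugate A₀ * A₁).charpoly
  refine ⟨Polynomial.resultant p p.derivative n n, fun x => ?_⟩
  have hp : p.map (MvPolynomial.eval x) =
      (adjugate (A₀.map (MvPolynomial.eval x)) * A₁.map (MvPolynomial.eval x)).charpoly := by
    rw [← charpoly_map, Matrix.map_mul]
    congr 2
    exact (RingHom.map_adjugate (MvPolynomial.eval x) A₀)
  rw [← Polynomial.resultant_map_map, ← Polynomial.derivative_map, hp]
  generalize hE : adjugate (A₀.map (MvPolynomial.eval x)) * A₁.map (MvPolynomial.eval x) = E
  have hdeg : E.charpoly.natDegree = n := by rw [charpoly_natDegree_eq_dim, Fintype.card_fin]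
  have hdeg' : E.charpoly.derivative.natDegree ≤ n :=
    (Polynomial.natDegree_derivative_le _).trans (by omega)
  constructor
  · intro h
    obtain ⟨a, b, -, -, hab⟩ := Polynomial.exists_mul_add_mul_eq_C_resultant (m := n) (n := n)
      E.charpoly E.charpoly.derivative hdeg.le hdeg' (by omega)
    rw [Polynomial.separable_def]
    refine ⟨Polynomial.C (Polynomial.resultant E.charpoly E.charpoly.derivative n n)⁻¹ * a,
      Polynomial.C (Polynomial.resultant E.charpoly E.charpoly.derivative n n)⁻¹ * b, ?_⟩
    rw [mul_assoc, mul_assoc, ← mul_add, mul_comm a, mul_comm b, hab, ← Polynomial.C_mul,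
      inv_mul_cancel₀ h, Polynomial.C_1]
  · intro h
    have := Polynomial.resultant_eq_prod_eval E.charpoly E.charpoly.derivative n hdeg'
      (IsAlgClosed.splits _)
    rw [hdeg] at this
    rw [this, (charpoly_monic E).leadingCoeff, one_pow, one_mul, Ne, Multiset.prod_eq_zero_iff]
    intro h0
    obtain ⟨a, ha, ha0⟩ := Multiset.mem_map.1 h0
    rw [Polynomial.mem_roots'] at ha
    obtain ⟨u, v, huv⟩ := h
    have := congrArg (Polynomial.eval a) huv
    rw [Polynomial.eval_add, Polynomial.eval_mul, Polynomial.eval_mul, ha.2.eq_zero, ha0] at this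
    simp at this

/-! ### Finiteness of presentations -/

theorem det_sum_single {k : Type*} [CommRing k] {n r : ℕ}
    (A : Fin (r + 1) → Matrix (Fin n) (Fin n) k) (i₀ i₁ i₂ : Fin (r + 1)) (p : k × k × k) :
    MvPolynomial.eval (Pi.single i₀ p.1 + Pi.single i₁ p.2.1 + Pi.single i₂ p.2.2)
      (genCharPoly A) = (p.1 • A i₀ + p.2.1 • A i₁ + p.2.2 • A i₂).det := by
  rw [eval_genCharPoly]
  congr 1
  simp [add_smul, Finset.sum_add_distrib, Pi.single_apply, ite_smul]

/-- **Main theorem (Brassil–Reichstein).** Let `k` be algebraically closed of characteristic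
`≠ 2`, `n ≥ 1`, `r ≥ 2`. There is a dense Zariski-open subset of `(Symm_n)^{r+1}` — encoded as
the nonvanishing locus, within the space of symmetric tuples, of a polynomial `f` on the matrix
entries that does not vanish identically on symmetric tuples — such that every symmetric tuple
`A` in this locus admits only finitely many symmetric presentations of `H_A` up to equivalence:
there is a finite set `S` of tuples such that every symmetric tuple `B` whose generalized
characteristic polynomial is a nonzero scalar multiple of that of `A` satisfies
`B'ᵢ = gᵀ Bᵢ g` (for all `i`) for some invertible `g` and some `B' ∈ S`. -/
theorem finitely_many_symmetric_presentations
    (k : Type*) [Field k] [IsAlgClosed k] (hk : ringChar k ≠ 2)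
    (n r : ℕ) (hn : 1 ≤ n) (hr : 2 ≤ r) :
    ∃ f : MvPolynomial (Fin (r + 1) × Fin n × Fin n) k,
      (∃ A : Fin (r + 1) → Matrix (Fin n) (Fin n) k, (∀ i, (A i).IsSymm) ∧
        MvPolynomial.eval (fun p => A p.1 p.2.1 p.2.2) f ≠ 0) ∧
      ∀ A : Fin (r + 1) → Matrix (Fin n) (Fin n) k, (∀ i, (A i).IsSymm) →
        MvPolynomial.eval (fun p => A p.1 p.2.1 p.2.2) f ≠ 0 →
        ∃ S : Finset (Fin (r + 1) → Matrix (Fin n) (Fin n) k),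
          ∀ B : Fin (r + 1) → Matrix (Fin n) (Fin n) k, (∀ i, (B i).IsSymm) →
            (∃ c : k, c ≠ 0 ∧ genCharPoly B = c • genCharPoly A) →
            ∃ B' ∈ S, ∃ g : Matrix (Fin n) (Fin n) k,
              IsUnit g ∧ ∀ i, B' i = gᵀ * B i * g := by
  classical
  have : Infinite k := IsAlgClosed.instInfinite
  let σ := Fin n ⊕ Sym2 (Fin n)
  let τ := Fin (r + 1) × Fin n × Fin n
  obtain ⟨l, hl⟩ : ∃ l : Fin n → k, Function.Injective l :=
    ⟨fun i => Infinite.natEmbedding k i, fun i j h => Fin.ext ((Infinite.natEmbedding k).injective h)⟩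
  choose q hq0 hq using exists_relation l hl
  -- The generic tuple, whose entries are the variables.
  let GA : Fin (r + 1) → Matrix (Fin n) (Fin n) (MvPolynomial τ k) := fun i =>
    of fun a b => MvPolynomial.X (i, a, b)
  have hGA : ∀ A i, (GA i).map (MvPolynomial.eval (entries A)) = A i := by
    intro A i
    ext a b
    simp [GA, entries]
  let δ : MvPolynomial τ k := (GA 0).det
  have hδ : ∀ A, MvPolynomial.eval (entries A) δ = (A 0).det := by
    intro A
    rw [RingHom.map_det, RingHom.mapMatrix_apply, hGA]
  -- Node values of the generic triple `(A 0, A 1, A j)`, before normalization of `A 0`.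
  let Z : Fin (r + 1) → σ → MvPolynomial τ k := fun j m =>
    ((node l m).1 • GA 0 + (node l m).2.1 • GA 1
      + (node l m).2.2 • GA j).det
  have hZ : ∀ A j m, MvPolynomial.eval (entries A) (Z j m) =
      ((node l m).1 • A 0 + (node l m).2.1 • A 1 + (node l m).2.2 • A j).det := by
    intro A j m
    rw [RingHom.map_det]
    congr 1
    ext a b
    simp [GA, entries]
  obtain ⟨D, hD⟩ := exists_discriminant hn (GA 0) (GA 1)
  choose F N hF using fun j v => exists_clear_denominators δ (Z j) (q v).leadingCoeff
  have h10 : (1 : Fin (r + 1)) ≠ 0 := by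
    intro h
    have := congrArg Fin.val h
    simp at this
    omega
  let J : Finset (Fin (r + 1)) := Finset.univ.filter fun j => j ≠ 0 ∧ j ≠ 1
  -- On the open set, `A 0` is invertible, `(A 0)⁻¹ * A 1` has distinct eigenvalues, and the relations
  -- `q v` keep their degree when specialized to the normalized node values of `(A 0, A 1, A j)`.
  refine ⟨δ * D * ∏ jv ∈ J ×ˢ (Finset.univ : Finset σ), F jv.1 jv.2, ?_, ?_⟩
  · refine NonvanishingOnSymm.mul (.mul ?_ ?_) (.prod _ ?_)
    · refine ⟨fun _ => 1, fun _ => isSymm_one, ?_⟩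
      rw [hδ]; simp
    · refine ⟨fun i => if i = 0 then 1 else diagonal l, fun i => ?_, ?_⟩
      · dsimp only
        split_ifs
        · exact isSymm_one
        · exact isSymm_diagonal l
      · rw [hD, hGA, hGA, if_pos rfl, if_neg h10, adjugate_one, one_mul, charpoly_diagonal]
        exact (Polynomial.separable_prod_X_sub_C_iff).2 hl
    · rintro ⟨j, v⟩ hj
      have hj' : j ≠ 0 ∧ j ≠ 1 := by simpa [J] using hj
      obtain ⟨y, hy⟩ : ∃ y : σ → k,
          MvPolynomial.eval (fun m => nodeVal l m y) (q v).leadingCoeff ≠ 0 := by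
        by_contra! h
        have h0 := (algebraicIndependent_iff.1 (algebraicIndependent_nodeVal l hl))
          (q v).leadingCoeff (MvPolynomial.funext fun y => by
            rw [eval_aeval_nodeVal, h y, map_zero])
        exact hq0 v (Polynomial.leadingCoeff_eq_zero.1 h0)
      let A : Fin (r + 1) → Matrix (Fin n) (Fin n) k := fun i =>
        if i = 0 then 1 else if i = 1 then diagonal (fun a => y (.inl a)) else
          symMat (fun s => y (.inr s))
      have hA0 : A 0 = 1 := if_pos rfl
      have hA1 : A 1 = diagonal (fun a => y (.inl a)) := by simp [A, h10]
      have hAj : A j = symMat (fun s => y (.inr s)) := by simp [A, hj']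
      refine ⟨A, fun i => ?_, ?_⟩
      · simp only [A]
        split_ifs
        · exact isSymm_one
        · exact isSymm_diagonal _
        · ext a b
          simp [symMat, Sym2.eq_swap]
      · have h1 : MvPolynomial.eval (entries A) δ = 1 := by rw [hδ, hA0, det_one]
        rw [hF _ _ _ (by rw [h1]; exact one_ne_zero), h1, one_pow, one_mul]
        simp only [hZ, hA0, hA1, hAj, div_one]
        exact hy
  · intro A hA hf
    change MvPolynomial.eval (entries A) _ ≠ 0 at hf
    rw [map_mul, map_mul, map_prod, mul_ne_zero_iff, mul_ne_zero_iff, Finset.prod_ne_zero_iff] at hf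
    obtain ⟨⟨hδA, hDA⟩, hFA⟩ := hf
    let z : Fin (r + 1) → σ → k := fun j m =>
      ((node l m).1 • A 0 + (node l m).2.1 • A 1 + (node l m).2.2 • A j).det / (A 0).det
    have hQ : ∀ j, j ≠ 0 → j ≠ 1 → ∀ v, (q v).map (MvPolynomial.eval (z j)) ≠ 0 := by
      intro j hj0 hj1 v h0
      have h1 := hFA (j, v) (by simp [J, hj0, hj1])
      rw [hF _ _ _ hδA] at h1
      apply right_ne_zero_of_mul h1
      have h2 := congrArg (fun p => Polynomial.coeff p (q v).natDegree) h0
      simp only [hZ, hδ]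
      simpa using h2
    rw [hδ] at hδA
    rw [hD, hGA, hGA] at hDA
    -- A finite set containing all entries of all normal forms of presentations.
    let T : Set k := {0, 1} ∪ ⋃ j, ⋃ v : σ,
      (((q v).map (MvPolynomial.eval (z j))).roots.toFinset : Set k)
    have hT : T.Finite := by
      refine Set.Finite.union (by simp) (Set.finite_iUnion fun j => Set.finite_iUnion fun v => ?_)
      exact Finset.finite_toSet _
    have hS : {B : Fin (r + 1) → Matrix (Fin n) (Fin n) k | ∀ i a b, B i a b ∈ T}.Finite :=
      Set.Finite.pi' fun _ => Set.Finite.pi' fun _ => Set.Finite.pi' fun _ => hT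
    refine ⟨hS.toFinset, fun B hB ⟨c, hc, hBA⟩ => ?_⟩
    have hdet : ∀ i₀ i₁ i₂ (p : k × k × k), (p.1 • B i₀ + p.2.1 • B i₁ + p.2.2 • B i₂).det =
        c * (p.1 • A i₀ + p.2.1 • A i₁ + p.2.2 • A i₂).det := by
      intro i₀ i₁ i₂ p
      rw [← det_sum_single, hBA, MvPolynomial.smul_eval, det_sum_single]
    have hB0 : (B 0).det = c * (A 0).det := by simpa using hdet 0 0 0 (1, 0, 0)
    have hB0' : (B 0).det ≠ 0 := by rw [hB0]; exact mul_ne_zero hc hδA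
    have hB0u : IsUnit (B 0).det := isUnit_iff_ne_zero.2 hB0'
    let E := (A 0).det • ((B 0)⁻¹ * B 1)
    have hE : B 0 * E = (A 0).det • B 1 := by
      simp only [E]
      rw [Matrix.mul_smul, ← mul_assoc, mul_nonsing_inv _ hB0u, one_mul]
    have hchar : E.charpoly = (adjugate (A 0) * A 1).charpoly := by
      refine Polynomial.funext fun x => ?_
      rw [eval_charpoly, eval_charpoly]
      apply mul_left_cancel₀ hB0'
      rw [← det_mul, hB0, mul_assoc, ← det_mul, mul_sub, mul_sub, hE, ← mul_assoc (A 0),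
        mul_adjugate]
      have := hdet 0 1 0 (x, -(A 0).det, 0)
      simpa [← smul_eq_mul_diagonal, scalar_apply, ← sub_eq_add_neg, mul_comm x] using this
    obtain ⟨g, hg, hg0, d, hg1⟩ := exists_congr_diagonal (hB 0) (hB 1) hB0' hδA hE
      (by rw [hchar]; exact hDA)
    refine ⟨fun i => gᵀ * B i * g, ?_, g, hg, fun i => rfl⟩
    -- Passing to the normal form rescales `genCharPoly A` by `1 / (A 0).det`.
    have hgc : g.det * c * g.det * (A 0).det = 1 := by
      have := congrArg det hg0
      rw [det_mul, det_mul, det_transpose, hB0, det_one] at this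
      rw [← this]; ring
    have hroot : ∀ j, j ≠ 0 → j ≠ 1 → ∀ y : σ → k, (∀ a, y (.inl a) = d a) →
        (symMat fun s => y (.inr s)) = gᵀ * B j * g → ∀ v, y v ∈ T := by
      intro j hj0 hj1 y hyd hyj v
      have hval : (fun m => nodeVal l m y) = z j := by
        ext m
        unfold nodeVal
        simp only [hyd]
        rw [hyj, ← hg1, ← hg0]
        have : (node l m).1 • (gᵀ * B 0 * g) + (node l m).2.1 • (gᵀ * B 1 * g)
            + (node l m).2.2 • (gᵀ * B j * g) =
            gᵀ * ((node l m).1 • B 0 + (node l m).2.1 • B 1 + (node l m).2.2 • B j) * g := by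
          simp [mul_add, add_mul]
        rw [this, det_mul, det_mul, det_transpose, hdet]
        simp only [z]
        rw [eq_div_iff hδA]
        linear_combination
          ((node l m).1 • A 0 + (node l m).2.1 • A 1 + (node l m).2.2 • A j).det * hgc
      refine Or.inr (Set.mem_iUnion.2 ⟨j, Set.mem_iUnion.2 ⟨v, ?_⟩⟩)
      rw [Finset.mem_coe, Multiset.mem_toFinset, Polynomial.mem_roots (hQ j hj0 hj1 v), ← hval]
      exact hq v y
    have hy : ∀ j, ∃ y : σ → k, (∀ a, y (.inl a) = d a) ∧
        (symMat fun s => y (.inr s)) = gᵀ * B j * g := by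
      intro j
      have hs : (gᵀ * B j * g).IsSymm := by
        simp [IsSymm, transpose_mul, (hB j).eq, Matrix.mul_assoc]
      refine ⟨Sum.elim d fun s =>
        Sym2.lift ⟨fun a b => (gᵀ * B j * g) a b, fun a b => hs.apply b a⟩ s, fun a => rfl, ?_⟩
      ext a b
      simp [symMat]
    -- The entries of `d` are controlled by any index other than `0` and `1`; `2` is one as `2 ≤ r`.
    have hTd : ∀ a, d a ∈ T := by
      intro a
      obtain ⟨y, hy1, hy2⟩ := hy ⟨2, by omega⟩
      rw [← hy1]
      refine hroot ⟨2, by omega⟩ ?_ ?_ y hy1 hy2 _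
      · simp [Fin.ext_iff]
      · rw [Ne, Fin.ext_iff, Fin.val_one', Nat.mod_eq_of_lt (by omega)]
        simp
    simp only [Set.Finite.mem_toFinset, Set.mem_ofPred_eq]
    intro i a b
    by_cases hi0 : i = 0
    · subst hi0
      rw [hg0]
      by_cases hab : a = b
      · subst hab; simp [T]
      · simp [T, hab]
    by_cases hi1 : i = 1
    · subst hi1
      rw [hg1]
      by_cases hab : a = b
      · subst hab; simpa using hTd a
      · simp [T, hab]
    obtain ⟨y, hy1, hy2⟩ := hy i
    rw [← hy2]
    exact hroot i hi0 hi1 y hy1 hy2 _
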